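/- Assume the ideal I_{N,w} is radical, and let Q ⊆ {0,…,n−1}. Then for every polynomial p ∈ F_2[S_Q] (the subring of R generated by the variables S_i with i ∈ Q), p belongs to I_{N,w} ∩ F_2[S_Q] if and only if p(S_{Q,e}) = 0 for every binary word e ∈ F_2^n of weight at most w. -/

import Mathlib

/-!
For a point `x = (σ, S)` with coordinates in `K`, put `σ(z) = 1 + ∑ σ_i z^i` and
`S(z) = ∑_{i ≥ 1} S_i z^i`. The Newton polynomials evaluated at `x` are coefficients of the power
series `σ(z) S(z) + z σ′(z)`, and because `S` is `n`-periodic the first `n + w` of them vanish only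
if all do (`mem_zeroLocus_newtonIdeal_iff`). So the variety of the Newton ideal consists of the
points where `S(z)` equals `z σ′(z) / σ(z)`, a logarithmic derivative in characteristic two.

* If `e` is a binary word of weight at most `w`, its locator `∏_{e_j ≠ 0} (1 + α^j z)` has this
  logarithmic derivative against the syndromes of `e` (`exists_point_of_word`).
* Conversely, given a point of the variety, `(1 - zⁿ) S(z)` is a polynomial `T` with
  `σ T = z σ′ (1 - zⁿ)`. Comparing residues, `T(α^{-j})` is the multiplicity of `α^{-j}` as a root
  of `σ`, hence `0` or `1` in `K` (`eval_eq_rootMultiplicity`). By Fourier inversion `S` is the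
  transform of the word `e_j = T(α^{-j})`, whose support injects into the roots of `σ`, so its
  weight is at most `deg σ ≤ w` (`exists_word_of_point`).

Thus the `S`-parts of the points of the variety are exactly the syndrome vectors of binary words of
weight at most `w`, and the Nullstellensatz for the radical Newton ideal turns membership in the
ideal into vanishing on these vectors.
-/

open MvPolynomial

noncomputable section

abbrev F2 : Type := ZMod 2

/-- `K` is an algebraic closure of `F₂`. -/
abbrev K : Type := AlgebraicClosure F2

/-- The variable `S_i` (index read modulo `n`) of the polynomial ring
`R = F₂[σ₁,…,σ_w, S₀,…,S_{n−1}]`, whose variables are indexed by `Fin w ⊕ ZMod n`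
(`Sum.inl i` is `σ_{i+1}`, `Sum.inr i` is `S_i`). -/
def Sv (n w : ℕ) (i : ℕ) : MvPolynomial (Fin w ⊕ ZMod n) F2 :=
  X (Sum.inr (i : ZMod n))

/-- The variable `σ_j` for `1 ≤ j ≤ w`, and `0` otherwise. -/
def sigv (n w : ℕ) (j : ℕ) : MvPolynomial (Fin w ⊕ ZMod n) F2 :=
  if h : 1 ≤ j ∧ j ≤ w then X (Sum.inl ⟨j - 1, by omega⟩) else 0

/-- The `i`-th Newton identity polynomial:
`S_i + ∑_{j=1}^{i−1} σ_j S_{i−j} + i·σ_i` for `i ≤ w`, and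
`S_i + ∑_{j=1}^{w} σ_j S_{i−j}` for `i > w` (indices of the `S` variables read modulo `n`;
over `F₂`, `+` and `−` coincide and `i·σ_i` is `σ_i` for odd `i` and `0` for even `i`). -/
def newtonPoly (n w : ℕ) (i : ℕ) : MvPolynomial (Fin w ⊕ ZMod n) F2 :=
  if i ≤ w then
    Sv n w i + (∑ j ∈ Finset.Ico 1 i, sigv n w j * Sv n w (i - j))
      + (i : MvPolynomial (Fin w ⊕ ZMod n) F2) * sigv n w i
  else
    Sv n w i + ∑ j ∈ Finset.Icc 1 w, sigv n w j * Sv n w (i - j)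

/-- The Newton ideal `I_{N,w}`, generated by the Newton identity polynomials
for `1 ≤ i ≤ n + w`. -/
def newtonIdeal (n w : ℕ) : Ideal (MvPolynomial (Fin w ⊕ ZMod n) F2) :=
  Ideal.span (newtonPoly n w '' Set.Icc 1 (n + w))

/-- The Fourier transform of a word `e ∈ Kⁿ`: `S_i(e) = ∑_j e_j α^(i·j)`. -/
def ft {n : ℕ} [NeZero n] (α : K) (e : ZMod n → K) (i : ZMod n) : K :=
  ∑ j : ZMod n, e j * α ^ (i.val * j.val)

/-- A word is binary if all its coordinates lie in the prime subfield `F₂ ⊆ K`,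
i.e. each coordinate is `0` or `1`. -/
def isBinary {n : ℕ} (e : ZMod n → K) : Prop := ∀ j, e j = 0 ∨ e j = 1

/-- The (Hamming) weight of a word: the number of its nonzero coordinates. -/
def wt {n : ℕ} (e : ZMod n → K) : ℕ := Set.ncard {j | e j ≠ 0}

end

/-! ### Newton identities as a power series identity -/

/-- The error locator polynomial `1 + σ₁ z + ⋯ + σ_w z^w` of a point `x = (σ, S)`; the
coordinate `Sum.inl i` is `σ_{i+1}`. -/
noncomputable def locPoly {n w : ℕ} (x : Fin w ⊕ ZMod n → K) : Polynomial K :=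
  1 + ∑ i : Fin w, Polynomial.C (x (Sum.inl i)) * Polynomial.X ^ (i.val + 1)

/-- The syndrome series `∑_{i ≥ 1} S_i z^i` of a point `x = (σ, S)`, with the index of `S_i`
read modulo `n`; the constant term is `0`, not `S_0`. -/
noncomputable def synSeries {n w : ℕ} (x : Fin w ⊕ ZMod n → K) : PowerSeries K :=
  PowerSeries.mk fun i => if i = 0 then 0 else x (Sum.inr (i : ZMod n))

lemma coeff_synSeries_of_pos {n w : ℕ} (x : Fin w ⊕ ZMod n → K) {i : ℕ} (hi : 1 ≤ i) :
    PowerSeries.coeff i (synSeries x) = x (Sum.inr (i : ZMod n)) := by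
  rw [synSeries, PowerSeries.coeff_mk, if_neg (by omega)]

lemma coeff_locPoly_zero {n w : ℕ} (x : Fin w ⊕ ZMod n → K) : (locPoly x).coeff 0 = 1 := by
  simp [locPoly]

lemma coeff_locPoly_succ {n w : ℕ} (x : Fin w ⊕ ZMod n → K) (j : ℕ) :
    (locPoly x).coeff (j + 1) = if h : j < w then x (Sum.inl ⟨j, h⟩) else 0 := by
  simp only [locPoly, Polynomial.coeff_add, Polynomial.coeff_one, Polynomial.finsetSum_coeff,
    Polynomial.coeff_C_mul, Polynomial.coeff_X_pow]
  rw [if_neg (by omega), zero_add]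
  split_ifs with h
  · rw [Finset.sum_eq_single ⟨j, h⟩]
    · simp
    · rintro b - hb
      rw [if_neg, mul_zero]
      intro h'
      exact hb (Fin.ext (by simp; omega))
    · simp
  · refine Finset.sum_eq_zero fun b _ => ?_
    rw [if_neg, mul_zero]
    have := b.2
    omega

lemma aeval_sigv {n w : ℕ} (x : Fin w ⊕ ZMod n → K) {j : ℕ} (hj : 1 ≤ j) :
    aeval x (sigv n w j) = (locPoly x).coeff j := by
  obtain ⟨j, rfl⟩ : ∃ k, j = k + 1 := ⟨j - 1, by omega⟩
  rw [coeff_locPoly_succ, sigv]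
  by_cases h : j < w
  · rw [dif_pos ⟨hj, h⟩, dif_pos h]
    simp
  · rw [dif_neg (by omega), dif_neg h, map_zero]

lemma coeff_locPoly_of_gt {n w : ℕ} (x : Fin w ⊕ ZMod n → K) {j : ℕ} (hj : w < j) :
    (locPoly x).coeff j = 0 := by
  obtain ⟨j, rfl⟩ : ∃ k, j = k + 1 := ⟨j - 1, by omega⟩
  rw [coeff_locPoly_succ, dif_neg (by omega)]

lemma natDegree_locPoly_le {n w : ℕ} (x : Fin w ⊕ ZMod n → K) : (locPoly x).natDegree ≤ w :=
  Polynomial.natDegree_le_iff_coeff_eq_zero.2 fun _ hN => coeff_locPoly_of_gt x hN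

lemma locPoly_ne_zero {n w : ℕ} (x : Fin w ⊕ ZMod n → K) : locPoly x ≠ 0 := by
  intro h
  simpa [h] using coeff_locPoly_zero x

/-- In characteristic two, the difference of the two sides of the logarithmic-derivative identity
`σ(z) S(z) = -z σ′(z)`. -/
noncomputable def newtonSeries {n w : ℕ} (x : Fin w ⊕ ZMod n → K) : PowerSeries K :=
  (locPoly x : PowerSeries K) * synSeries x
    + ((Polynomial.X * Polynomial.derivative (locPoly x) : Polynomial K) : PowerSeries K)

lemma coeff_newtonSeries {n w : ℕ} (x : Fin w ⊕ ZMod n → K) {i : ℕ} (hi : 1 ≤ i) :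
    PowerSeries.coeff i (newtonSeries x) =
      x (Sum.inr (i : ZMod n)) +
        (∑ j ∈ Finset.Ico 1 i, (locPoly x).coeff j * x (Sum.inr ((i - j : ℕ) : ZMod n)))
        + (i : K) * (locPoly x).coeff i := by
  have h2 : PowerSeries.coeff i
      ((Polynomial.X * Polynomial.derivative (locPoly x) : Polynomial K) : PowerSeries K)
      = (i : K) * (locPoly x).coeff i := by
    obtain ⟨i, rfl⟩ : ∃ k, i = k + 1 := ⟨i - 1, by omega⟩
    rw [Polynomial.coeff_coe, Polynomial.coeff_X_mul, Polynomial.coeff_derivative]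
    push_cast
    ring
  rw [newtonSeries, map_add, h2, PowerSeries.coeff_mul,
    Finset.Nat.sum_antidiagonal_eq_sum_range_succ_mk, Finset.sum_range_succ]
  congr 1
  rw [Finset.range_eq_Ico, Finset.sum_eq_sum_Ico_succ_bot (by omega)]
  simp only [Polynomial.coeff_coe, coeff_locPoly_zero, one_mul, Nat.sub_zero, Nat.sub_self]
  rw [coeff_synSeries_of_pos x hi]
  have h0 : PowerSeries.coeff 0 (synSeries x) = 0 := by simp [synSeries]
  rw [h0, mul_zero, add_zero]
  congr 1
  refine Finset.sum_congr rfl fun j hj => ?_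
  rw [Finset.mem_Ico] at hj
  rw [coeff_synSeries_of_pos x (by omega)]

lemma coeff_newtonSeries_of_gt {n w : ℕ} (x : Fin w ⊕ ZMod n → K) {i : ℕ} (hi : w < i) :
    PowerSeries.coeff i (newtonSeries x) =
      x (Sum.inr (i : ZMod n)) +
        ∑ j ∈ Finset.Icc 1 w, (locPoly x).coeff j * x (Sum.inr ((i - j : ℕ) : ZMod n)) := by
  rw [coeff_newtonSeries x (by omega), coeff_locPoly_of_gt x hi, mul_zero, add_zero]
  congr 1
  symm
  refine Finset.sum_subset (fun j hj => ?_) (fun j hj hj' => ?_)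
  · simp only [Finset.mem_Icc, Finset.mem_Ico] at *; omega
  · rw [coeff_locPoly_of_gt x, zero_mul]
    simp only [Finset.mem_Icc, Finset.mem_Ico] at *; omega

/-- The Newton polynomials, evaluated at a point, are the coefficients of `σ(z) S(z) + z σ′(z)`. -/
lemma aeval_newtonPoly {n w : ℕ} (x : Fin w ⊕ ZMod n → K) {i : ℕ} (hi : 1 ≤ i) :
    aeval x (newtonPoly n w i) = PowerSeries.coeff i (newtonSeries x) := by
  have hS : ∀ k, aeval x (Sv n w k) = x (Sum.inr (k : ZMod n)) := fun k => by simp [Sv]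
  rw [newtonPoly]
  split_ifs with h
  · rw [coeff_newtonSeries x hi]
    simp only [map_add, map_sum, map_mul, map_natCast, hS, aeval_sigv x hi]
    congr 2
    refine Finset.sum_congr rfl fun j hj => ?_
    rw [Finset.mem_Ico] at hj
    rw [aeval_sigv x hj.1]
  · rw [coeff_newtonSeries_of_gt x (by omega)]
    simp only [map_add, map_sum, map_mul, hS]
    congr 1
    refine Finset.sum_congr rfl fun j hj => ?_
    rw [Finset.mem_Icc] at hj
    rw [aeval_sigv x hj.1]

/-- Finitely many Newton identities suffice: beyond index `w` the coefficients of
`σ(z) S(z) + z σ′(z)` are periodic with period `n`. -/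
lemma mem_zeroLocus_newtonIdeal_iff {n w : ℕ} [NeZero n] (x : Fin w ⊕ ZMod n → K) :
    x ∈ zeroLocus K (newtonIdeal n w) ↔ newtonSeries x = 0 := by
  rw [newtonIdeal, zeroLocus_span]
  simp only [Set.forall_mem_image, Set.mem_ofPred_eq]
  have hn : 0 < n := NeZero.pos n
  constructor
  · intro h
    ext i
    rw [map_zero]
    induction i using Nat.strong_induction_on with
    | _ i ih =>
      rcases Nat.eq_zero_or_pos i with rfl | hi
      · simp [newtonSeries, synSeries]
      · by_cases hin : i ≤ n + w
        · rw [← aeval_newtonPoly x hi]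
          exact h ⟨hi, hin⟩
        · rw [← ih (i - n) (by omega), coeff_newtonSeries_of_gt x (by omega),
            coeff_newtonSeries_of_gt x (by omega)]
          have hc : ∀ j, j ≤ w → ((i - j : ℕ) : ZMod n) = ((i - n - j : ℕ) : ZMod n) := by
            intro j hj
            rw [show i - j = (i - n - j) + n by omega]
            simp
          congr 1
          · simpa using congrArg (fun k => x (Sum.inr k)) (hc 0 (by omega))
          · refine Finset.sum_congr rfl fun j hj => ?_
            rw [hc j (Finset.mem_Icc.1 hj).2]
  · intro h i hi
    rw [aeval_newtonPoly x hi.1, h, map_zero]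

/-! ### Logarithmic derivatives in characteristic two -/

lemma natCast_odd_eq_one {n : ℕ} (hodd : Odd n) : (n : K) = 1 := by
  obtain ⟨k, rfl⟩ := hodd
  push_cast
  rw [show (2 : K) = 0 from CharTwo.two_eq_zero, zero_mul, zero_add]

/-- The residue of the logarithmic derivative: if `T = z σ′ (1 - zⁿ) / σ` is a polynomial, its value
at an `n`-th root of unity `β` is the multiplicity of `β` as a root of `σ`, read in `K`. -/
lemma eval_eq_rootMultiplicity {n : ℕ} (hodd : Odd n) {s T : Polynomial K} (hs : s ≠ 0)
    (h : s * T = Polynomial.X * Polynomial.derivative s * (1 - Polynomial.X ^ n))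
    {β : K} (hβ : β ^ n = 1) :
    T.eval β = (s.rootMultiplicity β : K) := by
  obtain ⟨t, ht, hdvd⟩ := s.exists_eq_pow_rootMultiplicity_mul_and_not_dvd hs β
  set m := s.rootMultiplicity β
  obtain ⟨g, hg⟩ : (Polynomial.X - Polynomial.C β) ∣ (1 - Polynomial.X ^ n : Polynomial K) := by
    rw [Polynomial.dvd_iff_isRoot]
    simp [hβ]
  have hgβ : β * g.eval β = 1 := by
    have h1 := congrArg (fun q => β * (Polynomial.derivative q).eval β) hg
    simp only [Polynomial.derivative_sub, Polynomial.derivative_one, Polynomial.derivative_X_pow,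
      Polynomial.derivative_mul, Polynomial.derivative_X, Polynomial.derivative_C] at h1
    simp only [natCast_odd_eq_one hodd, Polynomial.eval_sub, Polynomial.eval_add,
      Polynomial.eval_mul, Polynomial.eval_pow, Polynomial.eval_X, Polynomial.eval_C,
      sub_self, zero_mul, add_zero, sub_zero, one_mul,
      zero_sub, map_one, CharTwo.neg_eq] at h1
    rw [← h1, mul_pow_sub_one hodd.pos.ne', hβ]
  have hder : (Polynomial.X - Polynomial.C β) * Polynomial.derivative s =
      (Polynomial.X - Polynomial.C β) ^ m *
        ((m : Polynomial K) * t + (Polynomial.X - Polynomial.C β) * Polynomial.derivative t) := by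
    rw [ht, Polynomial.derivative_mul, Polynomial.derivative_X_sub_C_pow]
    rcases Nat.eq_zero_or_pos m with h0 | h0
    · simp [h0]
    · rw [map_natCast]
      linear_combination (m : Polynomial K) * t * mul_pow_sub_one h0.ne' (Polynomial.X - Polynomial.C β)
  have hcancel : t * T = Polynomial.X * g *
      ((m : Polynomial K) * t + (Polynomial.X - Polynomial.C β) * Polynomial.derivative t) := by
    refine mul_left_cancel₀ (pow_ne_zero m (Polynomial.X_sub_C_ne_zero β)) ?_
    rw [← mul_assoc, ← ht, h, hg]
    linear_combination Polynomial.X * g * hder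
  have htβ : t.eval β ≠ 0 := fun h0 => hdvd (Polynomial.dvd_iff_isRoot.2 h0)
  have hev := congrArg (Polynomial.eval β) hcancel
  simp only [Polynomial.eval_mul, Polynomial.eval_add, Polynomial.eval_sub, Polynomial.eval_X,
    Polynomial.eval_C, Polynomial.eval_natCast, sub_self, zero_mul, add_zero] at hev
  refine mul_left_cancel₀ htβ ?_
  rw [hev, hgβ]
  ring

/-- A product of locator factors satisfies the logarithmic-derivative identity against the
corresponding sum of geometric series. -/
lemma prod_logDeriv {ι : Type*} (a : ι → K) (E : Finset ι) :
    ((∏ j ∈ E, (1 + Polynomial.C (a j) * Polynomial.X) : Polynomial K) : PowerSeries K) *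
      (∑ j ∈ E, PowerSeries.mk fun i => if i = 0 then 0 else a j ^ i) =
    ((Polynomial.X * Polynomial.derivative
      (∏ j ∈ E, (1 + Polynomial.C (a j) * Polynomial.X)) : Polynomial K) : PowerSeries K) := by
  classical
  induction E using Finset.induction_on with
  | empty => simp
  | insert j E hj ih =>
    have hgeo : ((1 + Polynomial.C (a j) * Polynomial.X : Polynomial K) : PowerSeries K) *
        (PowerSeries.mk fun i => if i = 0 then 0 else a j ^ i) =
        ((Polynomial.C (a j) * Polynomial.X : Polynomial K) : PowerSeries K) := by
      ext i
      simp only [Polynomial.coe_add, Polynomial.coe_one, Polynomial.coe_mul, Polynomial.coe_C,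
        Polynomial.coe_X, add_mul, one_mul, map_add, mul_assoc, PowerSeries.coeff_C_mul]
      rcases i with _ | i
      · simp
      · rw [PowerSeries.coeff_succ_X_mul, PowerSeries.coeff_mk, PowerSeries.coeff_mk,
          PowerSeries.coeff_X]
        rcases i with _ | i
        · simp
        · simp only [Nat.add_eq_zero_iff, one_ne_zero, and_false, if_false, Nat.add_eq_right]
          rw [← pow_succ', CharTwo.add_self_eq_zero, mul_zero]
    rw [Finset.prod_insert hj, Finset.sum_insert hj, Polynomial.derivative_mul]
    have hd : Polynomial.derivative (1 + Polynomial.C (a j) * Polynomial.X : Polynomial K)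
        = Polynomial.C (a j) := by simp
    rw [hd]
    simp only [Polynomial.coe_mul, Polynomial.coe_add] at *
    linear_combination
      ((1 : Polynomial K) + (Polynomial.C (a j) : Polynomial K) * (Polynomial.X : Polynomial K)
        : PowerSeries K) * ih
      + ((∏ j ∈ E, (1 + Polynomial.C (a j) * Polynomial.X) : Polynomial K) : PowerSeries K) * hgeo

/-! ### Sums and powers over residues modulo `n` -/

lemma sum_zmod_eq_sum_range {n : ℕ} [NeZero n] (f : ℕ → K) :
    ∑ i : ZMod n, f i.val = ∑ i ∈ Finset.range n, f i := by
  refine Finset.sum_nbij ZMod.val ?_ ?_ ?_ ?_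
  · intro i _
    exact Finset.mem_range.2 (ZMod.val_lt i)
  · exact (ZMod.val_injective n).injOn
  · intro i hi
    exact ⟨(i : ZMod n), by simp, ZMod.val_cast_of_lt (Finset.mem_range.1 hi)⟩
  · simp

lemma pow_val_natCast {n : ℕ} {b : K} (hb : b ^ n = 1) (i : ℕ) :
    b ^ (i : ZMod n).val = b ^ i := by
  rw [ZMod.val_natCast, ← pow_mod_orderOf b i, ← pow_mod_orderOf b (i % n),
    Nat.mod_mod_of_dvd _ (orderOf_dvd_of_pow_eq_one hb)]

/-! ### Points of the variety and binary words -/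

/-- Binary words of weight at most `w` give points of the variety of the Newton ideal. -/
lemma exists_point_of_word {n w : ℕ} [NeZero n] {α : K} (hα : IsPrimitiveRoot α n)
    (e : ZMod n → K) (he : isBinary e) (hwt : wt e ≤ w) :
    ∃ x : Fin w ⊕ ZMod n → K, x ∈ zeroLocus K (newtonIdeal n w) ∧
      ∀ i, x (Sum.inr i) = ft α e i := by
  classical
  set E : Finset (ZMod n) := Finset.univ.filter fun j => e j ≠ 0 with hE
  have hcard : E.card ≤ w := by
    have : wt e = E.card := by
      rw [wt, ← Set.ncard_coe_finset]
      simp [hE]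
    omega
  set a : ZMod n → K := fun j => α ^ j.val with ha
  set P : Polynomial K := ∏ j ∈ E, (1 + Polynomial.C (a j) * Polynomial.X) with hP
  have hdeg : P.natDegree ≤ w := by
    refine (Polynomial.natDegree_prod_le _ _).trans (le_trans ?_ hcard)
    refine (Finset.sum_le_card_nsmul _ _ 1 fun j _ => ?_).trans (by simp)
    compute_degree
  let x : Fin w ⊕ ZMod n → K := Sum.elim (fun i => P.coeff (i.val + 1)) (ft α e)
  refine ⟨x, ?_, fun i => rfl⟩
  have hloc : locPoly x = P := by
    ext i
    rcases i with _ | i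
    · rw [coeff_locPoly_zero, hP, Polynomial.coeff_zero_eq_eval_zero, Polynomial.eval_prod]
      simp
    · rw [coeff_locPoly_succ]
      split_ifs with h
      · rfl
      · rw [Polynomial.coeff_eq_zero_of_natDegree_lt (by omega)]
  have hsyn : synSeries x = ∑ j ∈ E, PowerSeries.mk fun i => if i = 0 then 0 else a j ^ i := by
    ext i
    rw [map_sum]
    simp only [synSeries, PowerSeries.coeff_mk]
    split_ifs with h
    · simp
    · change ft α e i = _
      rw [ft, hE, Finset.sum_filter]
      refine Finset.sum_congr rfl fun j _ => ?_
      have hp : α ^ ((i : ZMod n).val * j.val) = a j ^ i := by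
        rw [ha, mul_comm, pow_mul]
        exact pow_val_natCast (by rw [← pow_mul, mul_comm, pow_mul, hα.pow_eq_one, one_pow]) i
      rw [hp]
      rcases he j with h0 | h1
      · simp [h0]
      · simp [h1]
  rw [mem_zeroLocus_newtonIdeal_iff, newtonSeries, hloc, hsyn, prod_logDeriv,
    ← Polynomial.coe_add, CharTwo.add_self_eq_zero, Polynomial.coe_zero]

/-- Fourier inversion; the normalising factor `1 / n` is `1` because `n` is odd. -/
lemma ft_inversion {n : ℕ} [NeZero n] (hodd : Odd n) {α : K} (hα : IsPrimitiveRoot α n)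
    (s : ZMod n → K) (i : ZMod n) :
    ft α (fun j => ∑ k : ZMod n, s k * ((α ^ j.val)⁻¹) ^ k.val) i = s i := by
  have hα0 : α ≠ 0 := hα.ne_zero (NeZero.ne n)
  simp only [ft, Finset.sum_mul]
  rw [Finset.sum_comm, Finset.sum_eq_single i]
  · have : ∀ j : ZMod n, s i * ((α ^ j.val)⁻¹) ^ i.val * α ^ (i.val * j.val) = s i := by
      intro j
      rw [mul_comm i.val, pow_mul, mul_assoc, ← mul_pow,
        inv_mul_cancel₀ (pow_ne_zero _ hα0), one_pow, mul_one]
    rw [Finset.sum_congr rfl fun j _ => this j]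
    simp [ZMod.card, natCast_odd_eq_one hodd]
  · intro k _ hk
    -- The ratio `α ^ i / α ^ k` is an `n`-th root of unity other than `1`.
    set r : K := α ^ i.val * (α ^ k.val)⁻¹ with hr
    have hrn : r ^ n = 1 := by
      rw [hr, mul_pow, inv_pow, ← pow_mul, ← pow_mul, mul_comm, pow_mul', pow_mul', hα.pow_eq_one]
      simp
    have hr1 : r ≠ 1 := by
      intro h
      rw [hr, mul_inv_eq_one₀ (pow_ne_zero _ hα0)] at h
      exact hk (ZMod.val_injective n (hα.pow_inj (ZMod.val_lt k) (ZMod.val_lt i) h.symm))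
    have : ∀ j : ZMod n, s k * ((α ^ j.val)⁻¹) ^ k.val * α ^ (i.val * j.val)
        = s k * r ^ j.val := by
      intro j
      rw [hr, mul_pow, pow_mul, inv_pow, inv_pow, ← pow_mul, ← pow_mul, ← pow_mul,
        mul_comm j.val k.val]
      ring
    simp only [this]
    rw [← Finset.mul_sum, sum_zmod_eq_sum_range fun j => r ^ j, geom_sum_eq hr1, hrn]
    simp
  · simp

/-- Every point of the variety of the Newton ideal has as its `S`-part the Fourier transform of a
binary word of weight at most `w`: the coordinate of that word at `j` is the multiplicity, modulo
two, of `α⁻ʲ` as a root of the locator polynomial. -/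
lemma exists_word_of_point {n w : ℕ} [NeZero n] (hodd : Odd n) {α : K} (hα : IsPrimitiveRoot α n)
    (x : Fin w ⊕ ZMod n → K) (hx : x ∈ zeroLocus K (newtonIdeal n w)) :
    ∃ e : ZMod n → K, isBinary e ∧ wt e ≤ w ∧ ∀ i, ft α e i = x (Sum.inr i) := by
  classical
  rw [mem_zeroLocus_newtonIdeal_iff] at hx
  have hα0 : α ≠ 0 := hα.ne_zero (NeZero.ne n)
  -- One period of the syndrome series, that is `(1 - zⁿ) S(z)`.
  set T : Polynomial K := ∑ i ∈ Finset.range n,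
    Polynomial.C (x (Sum.inr ((i + 1 : ℕ) : ZMod n))) * Polynomial.X ^ (i + 1) with hT
  have hTS : (T : PowerSeries K) = synSeries x * ((1 - Polynomial.X ^ n : Polynomial K)) := by
    ext i
    rw [Polynomial.coe_sub, Polynomial.coe_one, Polynomial.coe_pow, Polynomial.coe_X, mul_sub,
      mul_one, map_sub, PowerSeries.coeff_mul_X_pow', Polynomial.coeff_coe, hT]
    simp only [Polynomial.finsetSum_coeff, Polynomial.coeff_C_mul, Polynomial.coeff_X_pow,
      synSeries, PowerSeries.coeff_mk]
    rcases i with _ | i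
    · have := NeZero.pos n
      simp [this.ne']
    · simp only [Nat.add_left_inj, mul_ite, mul_one, mul_zero, Finset.sum_ite_eq,
        Finset.mem_range, Nat.add_eq_zero_iff, one_ne_zero, and_false, if_false]
      by_cases h1 : i + 1 < n
      · rw [if_pos (by omega), if_neg (by omega), sub_zero]
      · rcases eq_or_ne (i + 1) n with h2 | h2
        · rw [if_pos (by omega), if_pos (by omega), if_pos (by omega), sub_zero]
        · rw [if_neg (by omega), if_pos (by omega), if_neg (by omega)]
          have : ((i + 1 - n : ℕ) : ZMod n) = ((i + 1 : ℕ) : ZMod n) := by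
            rw [Nat.cast_sub (by omega)]
            simp
          rw [this, sub_self]
  have hpoly : locPoly x * T =
      Polynomial.X * Polynomial.derivative (locPoly x) * (1 - Polynomial.X ^ n) := by
    refine Polynomial.coe_injective K ?_
    set b : Polynomial K := Polynomial.X * Polynomial.derivative (locPoly x) with hb
    have hbb : (b : PowerSeries K) + b = 0 := by
      rw [← Polynomial.coe_add, CharTwo.add_self_eq_zero, Polynomial.coe_zero]
    have hab : (locPoly x : PowerSeries K) * synSeries x = b :=
      (eq_neg_of_add_eq_zero_left hx).trans (eq_neg_of_add_eq_zero_left hbb).symm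
    rw [Polynomial.coe_mul, hTS, ← mul_assoc, hab, ← Polynomial.coe_mul]
  have hroot : ∀ j : ZMod n, ((α ^ j.val)⁻¹) ^ n = 1 := by
    intro j
    rw [inv_pow, ← pow_mul, mul_comm, pow_mul, hα.pow_eq_one, one_pow, inv_one]
  have hTeval : ∀ β : K, β ^ n = 1 → T.eval β = ∑ k : ZMod n, x (Sum.inr k) * β ^ k.val := by
    intro β hβ
    set f : ℕ → K := fun i => x (Sum.inr (i : ZMod n)) * β ^ i with hf
    have h1 : T.eval β = ∑ i ∈ Finset.range n, f (i + 1) := by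
      simp [hT, hf, Polynomial.eval_finsetSum]
    have h2 : ∑ k : ZMod n, x (Sum.inr k) * β ^ k.val = ∑ i ∈ Finset.range n, f i := by
      rw [← sum_zmod_eq_sum_range f]
      simp [hf]
    have h3 : f n = f 0 := by simp [hf, hβ]
    have h4 := (Finset.sum_range_succ f n).symm.trans (Finset.sum_range_succ' f n)
    rw [h3] at h4
    rw [h1, h2, add_right_cancel h4]
  set e : ZMod n → K := fun j => ((locPoly x).rootMultiplicity ((α ^ j.val)⁻¹) : K) with he
  have heq : e = fun j => ∑ k : ZMod n, x (Sum.inr k) * ((α ^ j.val)⁻¹) ^ k.val := by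
    funext j
    rw [← hTeval _ (hroot j), he,
      eval_eq_rootMultiplicity hodd (locPoly_ne_zero x) hpoly (hroot j)]
  refine ⟨e, fun j => ?_, ?_, fun i => ?_⟩
  · rcases Nat.even_or_odd ((locPoly x).rootMultiplicity ((α ^ j.val)⁻¹)) with h | h
    · left
      obtain ⟨k, hk⟩ := h
      simp [he, hk, CharTwo.add_self_eq_zero]
    · right
      exact natCast_odd_eq_one h
  · have hsub : Set.MapsTo (fun j : ZMod n => (α ^ j.val)⁻¹) {j | e j ≠ 0}
        ((locPoly x).roots.toFinset : Set K) := by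
      intro j hj
      have hm : (locPoly x).rootMultiplicity ((α ^ j.val)⁻¹) ≠ 0 := by
        intro h0
        exact hj (by simp [he, h0])
      simp only [Finset.mem_coe, Multiset.mem_toFinset]
      rw [← Multiset.count_ne_zero, Polynomial.count_roots]
      exact hm
    have hinj : Set.InjOn (fun j : ZMod n => (α ^ j.val)⁻¹) {j | e j ≠ 0} := by
      intro j _ k _ hjk
      exact ZMod.val_injective n
        (hα.pow_inj (ZMod.val_lt j) (ZMod.val_lt k) (inv_injective hjk))
    calc wt e ≤ ((locPoly x).roots.toFinset : Set K).ncard :=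
          Set.ncard_le_ncard_of_injOn _ hsub hinj (Finset.finite_toSet _)
      _ = (locPoly x).roots.toFinset.card := Set.ncard_coe_finset _
      _ ≤ Multiset.card (locPoly x).roots := Multiset.toFinset_card_le _
      _ ≤ (locPoly x).natDegree := Polynomial.card_roots' _
      _ ≤ w := natDegree_locPoly_le x
  · rw [heq]
    exact ft_inversion hodd hα (fun k => x (Sum.inr k)) i

/-- if `I_{N,w}` is radical and `Q ⊆ {0,…,n−1}`, then a polynomial `p` in
the variables `S_i`, `i ∈ Q`, belongs to `I_{N,w} ∩ F₂[S_Q]` if and only if it vanishes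
on the syndromes `S_{Q,e}` of all binary words `e` of weight at most `w`. -/
theorem mem_newton_eliminationQ_iff_vanishes_on_syndromes (n m w : ℕ) [NeZero n] (hodd : Odd n) (hm : 0 < m)
    (hdvd : n ∣ 2 ^ m - 1) (hw1 : 1 ≤ w) (hwn : w ≤ n)
    (α : K) (hα : IsPrimitiveRoot α n)
    (hrad : (newtonIdeal n w).IsRadical)
    (Q : Set (ZMod n))
    (p : MvPolynomial Q F2) :
    MvPolynomial.rename (fun i : Q => (Sum.inr i.1 : Fin w ⊕ ZMod n)) p ∈ newtonIdeal n w ↔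
      ∀ e : ZMod n → K, isBinary e → wt e ≤ w →
        MvPolynomial.aeval (fun i : Q => ft α e i.1) p = 0 := by
  have hV : newtonIdeal n w = vanishingIdeal F2 (zeroLocus K (newtonIdeal n w)) := by
    rw [vanishingIdeal_zeroLocus_eq_radical, hrad.radical]
  rw [hV, mem_vanishingIdeal_iff]
  simp only [aeval_rename]
  constructor
  · intro h e he hwt
    obtain ⟨x, hx, hxe⟩ := exists_point_of_word hα e he hwt
    rw [← h x hx]
    congr 2
    funext i
    exact (hxe i.1).symm
  · intro h x hx
    obtain ⟨e, he, hwt, hex⟩ := exists_word_of_point hodd hα x hx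
    rw [← h e he hwt]
    congr 2
    funext i
    exact (hex i.1).symm
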